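/- Let n be an odd positive integer, ξ ∈ ℂ a primitive n-th root of unity, and 1 ≤ i ≤ n−1. Then for every j with 1 ≤ j ≤ n−1 and j ≠ i, the point P_i of the intersection U ∩ g^i·U does not lie in the translate g^j·U; that is, the intersection point U ∩ g^i·U is not contained in any other translate g^j·U. -/

import Mathlib

noncomputable section

/-- The surface `U = {(w,x,y,z) ∈ (ℂ*)^4 : w + y = 1, x + z = 1}`, as a set of
quadruples of (nonzero) complex numbers. -/
def U : Set (ℂ × ℂ × ℂ × ℂ) :=
  {p | p.1 ≠ 0 ∧ p.2.1 ≠ 0 ∧ p.2.2.1 ≠ 0 ∧ p.2.2.2 ≠ 0 ∧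
    p.1 + p.2.2.1 = 1 ∧ p.2.1 + p.2.2.2 = 1}

/-- Translation of a subset of `(ℂ*)^4` by `(c, c, c⁻¹, c⁻¹)` under componentwise
multiplication; for `c = ξ^i` and `g = (ξ, ξ, ξ⁻¹, ξ⁻¹)` this is the gTranslate
`g^i · S = {g^i · u : u ∈ S}`. -/
def gTranslate (c : ℂ) (S : Set (ℂ × ℂ × ℂ × ℂ)) : Set (ℂ × ℂ × ℂ × ℂ) :=
  (fun p => (c * p.1, c * p.2.1, c⁻¹ * p.2.2.1, c⁻¹ * p.2.2.2)) '' S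

/-- The point `P_k = (ξ^k/(1+ξ^k), ξ^k/(1+ξ^k), 1/(1+ξ^k), 1/(1+ξ^k))`. -/
def P (ξ : ℂ) (k : ℕ) : ℂ × ℂ × ℂ × ℂ :=
  (ξ ^ k / (1 + ξ ^ k), ξ ^ k / (1 + ξ ^ k), 1 / (1 + ξ ^ k), 1 / (1 + ξ ^ k))

/-- The map `p_n(w, x, y, z) = (wⁿ, w/x, w·y, w·z)`. -/
def pmap (n : ℕ) (p : ℂ × ℂ × ℂ × ℂ) : ℂ × ℂ × ℂ × ℂ :=
  (p.1 ^ n, p.1 / p.2.1, p.1 * p.2.2.1, p.1 * p.2.2.2)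

/-! For `a = ξ ^ k`, scaling `P_k` back by the inverse of `(c, c, c⁻¹, c⁻¹)` turns both equations of
`U` into `c⁻¹ * a / (1 + a) + c / (1 + a) = 1`. Cleared of denominators, this is the quadratic
`(c - 1) * (c - a) = 0` in `c`, so the only translates of `U` through `P_k` are `U` itself and the
one by `a`. -/

theorem mem_gTranslate_iff {c : ℂ} (hc : c ≠ 0) {S : Set (ℂ × ℂ × ℂ × ℂ)} {w x y z : ℂ} :
    (w, x, y, z) ∈ gTranslate c S ↔ (c⁻¹ * w, c⁻¹ * x, c * y, c * z) ∈ S := by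
  constructor
  · rintro ⟨⟨w', x', y', z'⟩, hS, heq⟩
    obtain ⟨rfl, rfl, rfl, rfl⟩ : c * w' = w ∧ c * x' = x ∧ c⁻¹ * y' = y ∧ c⁻¹ * z' = z := by
      simpa only [Prod.mk.injEq] using heq
    simpa only [inv_mul_cancel_left₀ hc, mul_inv_cancel_left₀ hc] using hS
  · intro hS
    refine ⟨_, hS, ?_⟩
    simp only [inv_mul_cancel_left₀ hc, mul_inv_cancel_left₀ hc]

theorem inv_mul_div_add_mul_div_eq_one_iff {K : Type*} [Field K] {a c : K} (hc : c ≠ 0)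
    (ha : 1 + a ≠ 0) :
    c⁻¹ * (a / (1 + a)) + c * (1 / (1 + a)) = 1 ↔ c = 1 ∨ c = a := by
  calc c⁻¹ * (a / (1 + a)) + c * (1 / (1 + a)) = 1
      ↔ a + c ^ 2 = c * (1 + a) := by field_simp
    _ ↔ (c - 1) * (c - a) = 0 := by
        rw [← sub_eq_zero]
        ring_nf
    _ ↔ c = 1 ∨ c = a := by rw [mul_eq_zero, sub_eq_zero, sub_eq_zero]

theorem P_mem_gTranslate_U_iff {ξ c : ℂ} {k : ℕ} (hξ : ξ ≠ 0) (hc : c ≠ 0)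
    (hk : 1 + ξ ^ k ≠ 0) : P ξ k ∈ gTranslate c U ↔ c = 1 ∨ c = ξ ^ k := by
  have hfst : c⁻¹ * (ξ ^ k / (1 + ξ ^ k)) ≠ 0 :=
    mul_ne_zero (inv_ne_zero hc) (div_ne_zero (pow_ne_zero k hξ) hk)
  have hsnd : c * (1 / (1 + ξ ^ k)) ≠ 0 := mul_ne_zero hc (one_div_ne_zero hk)
  rw [P, mem_gTranslate_iff hc, ← inv_mul_div_add_mul_div_eq_one_iff hc hk]
  exact ⟨fun hU ↦ hU.2.2.2.2.1, fun h ↦ ⟨hfst, hfst, hsnd, hsnd, h, h⟩⟩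

theorem one_add_ne_zero_of_odd_of_pow_eq_one {R : Type*} [Ring R] [NeZero (2 : R)] {ζ : R} {n : ℕ}
    (hn : Odd n) (hζ : ζ ^ n = 1) : 1 + ζ ≠ 0 := by
  intro h
  have hneg : (-1 : R) = 1 := by
    rw [← hn.neg_one_pow, neg_eq_of_add_eq_zero_right h, hζ]
  apply two_ne_zero (α := R)
  rw [← one_add_one_eq_two, ← neg_eq_iff_add_eq_zero, hneg]

theorem point_not_in_other_translate_general {ξ : ℂ} (hξ : ξ ≠ 0) {i j : ℕ} (hi : 1 + ξ ^ i ≠ 0)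
    (hj : ξ ^ j ≠ 1) (hji : ξ ^ j ≠ ξ ^ i) : P ξ i ∉ gTranslate (ξ ^ j) U := by
  rw [P_mem_gTranslate_U_iff hξ (pow_ne_zero j hξ) hi]
  exact not_or_intro hj hji

/-- Let `n` be an odd positive integer, `ξ` a primitive `n`-th root
of unity, and `1 ≤ i ≤ n - 1`. Then for every `j` with `1 ≤ j ≤ n - 1` and
`j ≠ i`, the point `P_i` of the intersection `U ∩ g^i·U` does not lie in the
translate `g^j·U`. -/
theorem point_not_in_other_translate (n : ℕ) (hpos : 0 < n) (hodd : Odd n) (ξ : ℂ)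
    (hξ : IsPrimitiveRoot ξ n) (i : ℕ) (h1 : 1 ≤ i) (h2 : i ≤ n - 1)
    (j : ℕ) (hj1 : 1 ≤ j) (hj2 : j ≤ n - 1) (hji : j ≠ i) :
    P ξ i ∉ gTranslate (ξ ^ j) U := by
  have hi : 1 + ξ ^ i ≠ 0 :=
    one_add_ne_zero_of_odd_of_pow_eq_one hodd (by rw [pow_right_comm, hξ.pow_eq_one, one_pow])
  exact point_not_in_other_translate_general (hξ.ne_zero hpos.ne') hi
    (hξ.pow_ne_one_of_pos_of_lt (by lia) (by lia)) (fun h ↦ hji (hξ.pow_inj (by lia) (by lia) h))
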